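/- Let G be a finitely generated group with a normal subgroup N of finite index. Then G admits a golden system with respect to N. In particular, every finite group admits a golden system. -/

import Mathlib

/-!
Index the cells of the partition by the elements of the finite group `G ⧸ N`, through a bijection
`ς`. Then the configurations of `(𝔤, ℰ)` record how left multiplication by each generator permutes
the cosets of `N`. If `(𝔥, ℱ)` has the same configuration set, let `f : H → G ⧸ N` send `y` to the
coset corresponding to the cell of `ℱ` that contains `y`; equality of the configuration sets forces
`f (hᵢ * y) = q(gᵢ) * f y` for every `y`. An induction on words (`map_word_mul`) extends this to
`f (W(J, ρ; 𝔥) * y) = W(J, ρ; q(𝔤)) * f y`, which for `f y = 1` is the required inclusion, whatever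
representative pairs are chosen.
-/

open scoped Pointwise

universe u v

/-- `g` is an (ordered, finite) generating tuple of the group `G`. -/
def IsGenerating {G : Type*} [Group G] {n : ℕ} (g : Fin n → G) : Prop :=
  Subgroup.closure (Set.range g) = ⊤

/-- `E` is an (ordered, finite) partition of the underlying set of `G`:
every element lies in exactly one cell. -/
def IsPartition {G : Type*} {m : ℕ} (E : Fin m → Set G) : Prop :=
  ∀ x : G, ∃! i : Fin m, x ∈ E i

/-- The type in which two-sided configurations corresponding to a generating tuple of
length `n` and a partition of length `m` live: a tuple `(c₀, (c₁,…,cₙ), (c_{n+1},…,c_{2n}))`. -/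
abbrev TwoSidedConfig (n m : ℕ) := Fin m × (Fin n → Fin m) × (Fin n → Fin m)

/-- The two-sided configuration set `Con_t(𝔤, ℰ)`. -/
def TwoSidedConfigSet {G : Type*} [Group G] {n m : ℕ} (g : Fin n → G) (E : Fin m → Set G) :
    Set (TwoSidedConfig n m) :=
  {c | ∃ x ∈ E c.1, ∀ i : Fin n, g i * x ∈ E (c.2.1 i) ∧ x * g i ∈ E (c.2.2 i)}

/-- `Con_t(G)`: the collection of all two-sided configuration sets of `G`,
over all configuration pairs `(𝔤, ℰ)`. -/
def TwoSidedConfigSets (G : Type*) [Group G] : Set (Σ n m : ℕ, Set (TwoSidedConfig n m)) :=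
  {S | ∃ g : Fin S.1 → G, ∃ E : Fin S.2.1 → Set G,
    IsGenerating g ∧ IsPartition E ∧ S.2.2 = TwoSidedConfigSet g E}

/-- Two-sided configuration equivalence `G ≈ₜ H`. -/
def ConfigEqT (G : Type*) (H : Type*) [Group G] [Group H] : Prop :=
  TwoSidedConfigSets G = TwoSidedConfigSets H

/-- The (one-sided) configuration set `Con(𝔤, ℰ)`. -/
def ConfigSet {G : Type*} [Group G] {n m : ℕ} (g : Fin n → G) (E : Fin m → Set G) :
    Set (Fin m × (Fin n → Fin m)) :=
  {c | ∃ x ∈ E c.1, ∀ k : Fin n, g k * x ∈ E (c.2 k)}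

/-- `Con(G)`: the collection of all configuration sets of `G`. -/
def ConfigSets (G : Type*) [Group G] : Set (Σ n m : ℕ, Set (Fin m × (Fin n → Fin m))) :=
  {S | ∃ g : Fin S.1 → G, ∃ E : Fin S.2.1 → Set G,
    IsGenerating g ∧ IsPartition E ∧ S.2.2 = ConfigSet g E}

/-- Configuration equivalence `G ≈ H`. -/
def ConfigEq (G : Type*) (H : Type*) [Group G] [Group H] : Prop :=
  ConfigSets G = ConfigSets H

/-- The word `W(J, ρ; 𝔤) = ∏_{i=1}^{p} g_{J(i)}^{ρ(i)}` associated to a representative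
pair `(J, ρ)` (here `ρ i = true` encodes exponent `1`, and `ρ i = false` exponent `-1`). -/
def word {G : Type*} [Group G] {n p : ℕ} (g : Fin n → G) (J : Fin p → Fin n)
    (ρ : Fin p → Bool) : G :=
  ((List.finRange p).map (fun i => if ρ i then g (J i) else (g (J i))⁻¹)).prod

/-- The configuration pair `(𝔤, q⁻¹(ℰ))` is golden w.r.t. the normal subgroup `N`,
where `ℰ` is a partition of `G ⧸ N` containing the singleton `{1}`. -/
def IsGoldenConfigPair {G : Type u} [Group G] (N : Subgroup G) [N.Normal] {n m : ℕ}
    (g : Fin n → G) (E : Fin m → Set (G ⧸ N)) : Prop :=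
  IsGenerating g ∧ IsPartition E ∧
  ∃ i₀ : Fin m, E i₀ = ({1} : Set (G ⧸ N)) ∧
  ∃ (p : G → ℕ) (J : ∀ x : G, Fin (p x) → Fin n) (ρ : ∀ x : G, Fin (p x) → Bool),
    (∀ x : G, x ∉ N →
      QuotientGroup.mk' N x = word (fun i => QuotientGroup.mk' N (g i)) (J x) (ρ x)) ∧
    (∀ (H : Type v) [Group H] (h : Fin n → H) (F : Fin m → Set H),
      IsGenerating h → IsPartition F →
      TwoSidedConfigSet g (fun i => QuotientGroup.mk' N ⁻¹' E i) = TwoSidedConfigSet h F →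
      ∀ x : G, x ∉ N → word h (J x) (ρ x) • F i₀ ∩ F i₀ = ∅)

/-- `G` has a golden configuration pair w.r.t. the normal subgroup `N`. -/
def HasGoldenConfigPairWrt (G : Type u) [Group G] (N : Subgroup G) [N.Normal] : Prop :=
  ∃ (n m : ℕ) (g : Fin n → G) (E : Fin m → Set (G ⧸ N)), IsGoldenConfigPair.{u, v} N g E

/-- `G` has a golden configuration pair (i.e. one w.r.t. the trivial subgroup). -/
def HasGoldenConfigPair (G : Type u) [Group G] : Prop :=
  HasGoldenConfigPairWrt.{u, v} G ⊥

/-- `(𝔤, ς, {(J_g, ρ_g)})` is a golden system w.r.t. the normal subgroup `N`.  The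
finite-range function `ς` on `G ⧸ N` is encoded as a surjection onto `Fin m`; the
`ς`-partition of `G` is then `v ↦ (ς ∘ q)⁻¹(v)`, `v : Fin m`. -/
def IsGoldenSystem {G : Type u} [Group G] (N : Subgroup G) [N.Normal] {n m : ℕ}
    (g : Fin n → G) (ς : G ⧸ N → Fin m)
    {p : G → ℕ} (J : ∀ x : G, Fin (p x) → Fin n) (ρ : ∀ x : G, Fin (p x) → Bool) : Prop :=
  IsGenerating g ∧ Function.Surjective ς ∧
  (∀ x : G, x ∉ N →
    QuotientGroup.mk' N x = word (fun i => QuotientGroup.mk' N (g i)) (J x) (ρ x)) ∧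
  ((fun x : G => ς (QuotientGroup.mk' N x)) ⁻¹' {ς (1 : G ⧸ N)} = (N : Set G)) ∧
  (∀ (H : Type v) [Group H] (h : Fin n → H) (F : Fin m → Set H),
    IsGenerating h → IsPartition F →
    TwoSidedConfigSet g (fun v => (fun x : G => ς (QuotientGroup.mk' N x)) ⁻¹' {v})
      = TwoSidedConfigSet h F →
    ∀ x : G, x ∉ N →
      word h (J x) (ρ x) • F (ς (1 : G ⧸ N)) ⊆ F (ς (QuotientGroup.mk' N x)))

/-- `G` admits a golden system w.r.t. the normal subgroup `N`. -/
def HasGoldenSystemWrt (G : Type u) [Group G] (N : Subgroup G) [N.Normal] : Prop :=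
  ∃ (n m : ℕ) (g : Fin n → G) (ς : G ⧸ N → Fin m) (p : G → ℕ)
    (J : ∀ x : G, Fin (p x) → Fin n) (ρ : ∀ x : G, Fin (p x) → Bool),
    IsGoldenSystem.{u, v} N g ς J ρ

/-- `G` admits a golden system (i.e. one w.r.t. the trivial subgroup). -/
def HasGoldenSystem (G : Type u) [Group G] : Prop :=
  HasGoldenSystemWrt.{u, v} G ⊥

/-- A group is Hopfian if every surjective endomorphism is an automorphism. -/
def IsHopfianGroup (G : Type*) [Group G] : Prop :=
  ∀ f : G →* G, Function.Surjective f → Function.Bijective f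

/-- A group is finitely presented if it is presented by finitely many generators
and finitely many relators. -/
def IsFinitelyPresentedGroup (G : Type*) [Group G] : Prop :=
  ∃ (n : ℕ) (rels : Set (FreeGroup (Fin n))),
    rels.Finite ∧ Nonempty (PresentedGroup rels ≃* G)

/-- A group is polycyclic if it has a subnormal series with cyclic factors. -/
def IsPolycyclic (G : Type*) [Group G] : Prop :=
  ∃ (k : ℕ) (c : Fin (k + 1) → Subgroup G),
    c 0 = ⊥ ∧ c (Fin.last k) = ⊤ ∧
    ∀ i : Fin k, c i.castSucc ≤ c i.succ ∧
      ∃ hn : ((c i.castSucc).subgroupOf (c i.succ)).Normal,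
        letI := hn
        IsCyclic ((c i.succ) ⧸ (c i.castSucc).subgroupOf (c i.succ))

/-- An FC-group: every conjugacy class is finite. -/
def IsFCGroup (G : Type*) [Group G] : Prop :=
  ∀ g : G, {h : G | IsConj g h}.Finite

/-- A normal subset: `hM = Mh` for all `h`. -/
def IsNormalSubset {H : Type*} [Group H] (M : Set H) : Prop :=
  ∀ h : H, (fun x => h * x) '' M = (fun x => x * h) '' M

/-- `E'` is a refinement of the partition `E`. -/
def IsRefinement {G : Type*} {r s : ℕ} (E' : Fin s → Set G) (E : Fin r → Set G) : Prop :=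
  ∀ l : Fin s, ∃ k : Fin r, E' l ⊆ E k

/-- The pairs `(ℰ', ℰ)` and `(ℱ', ℱ)` are similar. -/
def SimilarPairs {G H : Type*} {r s : ℕ} (E : Fin r → Set G) (E' : Fin s → Set G)
    (F : Fin r → Set H) (F' : Fin s → Set H) : Prop :=
  ∀ k : Fin r, {l : Fin s | (E k ∩ E' l).Nonempty} = {l : Fin s | (F k ∩ F' l).Nonempty}

universe w

/-- Every element of a group is a word in a given generating tuple. -/
lemma exists_word_eq {G : Type*} [Group G] {n : ℕ} {g : Fin n → G} (hg : IsGenerating g) (x : G) :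
    ∃ (p : ℕ) (J : Fin p → Fin n) (ρ : Fin p → Bool), word g J ρ = x := by
  have hx : x ∈ (FreeGroup.lift g).range := by
    rw [FreeGroup.range_lift_eq_closure, hg]
    exact Subgroup.mem_top x
  obtain ⟨w, rfl⟩ := hx
  refine ⟨w.toWord.length, fun i => (w.toWord.get i).1, fun i => (w.toWord.get i).2, ?_⟩
  conv_rhs => rw [← FreeGroup.mk_toWord (x := w), FreeGroup.lift_mk,
    ← List.map_get_finRange w.toWord, List.map_map]
  unfold word
  congr 2
  funext i
  simp only [Function.comp_apply]
  cases (w.toWord.get i).2 <;> rfl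

lemma map_word {G Q : Type*} [Group G] [Group Q] (φ : G →* Q) {n p : ℕ} (g : Fin n → G)
    (J : Fin p → Fin n) (ρ : Fin p → Bool) :
    φ (word g J ρ) = word (fun i => φ (g i)) J ρ := by
  unfold word
  rw [map_list_prod, List.map_map]
  congr 2
  funext i
  simp only [Function.comp_apply]
  split <;> simp

/-- A map that intertwines left multiplication by the letters `h i` and `k i` intertwines left
multiplication by words, including those with inverse letters. -/
lemma map_word_mul {H Q : Type*} [Group H] [Group Q] {n p : ℕ} {h : Fin n → H} {k : Fin n → Q}
    {f : H → Q} (hf : ∀ i y, f (h i * y) = k i * f y) (J : Fin p → Fin n) (ρ : Fin p → Bool)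
    (y : H) : f (word h J ρ * y) = word k J ρ * f y := by
  unfold word
  induction List.finRange p with
  | nil => simp
  | cons a l ih =>
    simp only [List.map_cons, List.prod_cons, mul_assoc]
    split
    · rw [hf, ih]
    · rw [eq_inv_mul_iff_mul_eq, ← hf, mul_inv_cancel_left, ih]

/-- The class map `f` of a family `F` with the same configurations as the partition of `G` into
fibres of `q` is equivariant on generators: a configuration is determined by its first entry as far
as left multiplication is concerned, because the cells are indexed injectively by `Q`. -/
lemma classMap_mul {G H Q : Type*} [Group G] [Group H] [Group Q] {n m : ℕ} (q : G →* Q)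
    (ς : Q ≃ Fin m) {g : Fin n → G} {h : Fin n → H} {F : Fin m → Set H}
    (hcon : TwoSidedConfigSet g (fun v => (fun x : G => ς (q x)) ⁻¹' {v}) = TwoSidedConfigSet h F)
    {f : H → Q} (hf : ∀ y, y ∈ F (ς (f y))) (i : Fin n) (y : H) :
    f (h i * y) = q (g i) * f y := by
  have hc : (ς (f y), (fun j => ς (f (h j * y))), (fun j => ς (f (y * h j)))) ∈
      TwoSidedConfigSet h F := ⟨y, hf y, fun j => ⟨hf _, hf _⟩⟩
  rw [← hcon] at hc
  obtain ⟨x, hx, hx'⟩ := hc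
  have h1 : q x = f y := ς.injective hx
  have h2 : q (g i * x) = f (h i * y) := ς.injective (hx' i).1
  rw [← h2, map_mul, h1]

lemma hasGoldenSystemWrt_of_fg_of_finiteIndex {G : Type u} [Group G] (hfg : Group.FG G)
    (N : Subgroup G) [N.Normal] (hfi : N.FiniteIndex) : HasGoldenSystemWrt.{u, v} G N := by
  obtain ⟨S, hS⟩ := Group.fg_def.1 hfg
  let g : Fin S.card → G := fun i => (S.equivFin.symm i : G)
  have hg : IsGenerating g := by
    have hr : Set.range g = (S : Set G) := by
      have hcomp : g = Subtype.val ∘ S.equivFin.symm := rfl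
      rw [hcomp, EquivLike.range_comp]
      exact Subtype.range_coe
    rw [IsGenerating, hr, hS]
  let ς : G ⧸ N ≃ Fin (Nat.card (G ⧸ N)) := Finite.equivFin (G ⧸ N)
  choose p J ρ hW using exists_word_eq hg
  have hWq (x : G) : QuotientGroup.mk' N x =
      word (fun i => QuotientGroup.mk' N (g i)) (J x) (ρ x) := by
    rw [← map_word, hW]
  refine ⟨S.card, _, g, ς, p, J, ρ, hg, ς.surjective, fun x _ => hWq x, ?_, ?_⟩
  · ext x
    simp
  · rintro H _ h F - hF hcon x - _ ⟨y, hy, rfl⟩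
    choose c hc using fun z => (hF z).exists
    let f : H → G ⧸ N := fun z => ς.symm (c z)
    have hf (z : H) : z ∈ F (ς (f z)) := by simpa [f] using hc z
    have hy1 : f y = 1 := ς.injective ((hF y).unique (hf y) hy)
    have hmem := hf (word h (J x) (ρ x) * y)
    rw [map_word_mul (classMap_mul (QuotientGroup.mk' N) ς hcon hf), hy1, mul_one, ← hWq]
      at hmem
    exact hmem

/-- a finitely generated group admits a golden system w.r.t. any normal
subgroup of finite index; in particular every finite group admits a golden system. -/
theorem hasGoldenSystemWrt_of_finiteIndex {G : Type u} [Group G] (hfg : Group.FG G)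
    (N : Subgroup G) [N.Normal] (hfi : N.FiniteIndex) :
    HasGoldenSystemWrt.{u, v} G N ∧
      ∀ (K : Type w) [Group K], Finite K → HasGoldenSystem.{w, v} K := by
  refine ⟨hasGoldenSystemWrt_of_fg_of_finiteIndex hfg N hfi, fun K _ _ => ?_⟩
  exact hasGoldenSystemWrt_of_fg_of_finiteIndex inferInstance ⊥ inferInstance
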